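/- Let B be a finite-dimensional algebra over a field k. If B is twisted periodic, then every finitely generated B-module has complexity at most one. -/

import Mathlib

open TensorProduct

/-- There is an exact sequence `0 → M → P_n → ⋯ → P_1 → N → 0` of `R`-modules
(so with `n` middle terms) in which each middle term `P_i` is projective. -/
def HasProjExactSeq (R : Type) [Ring R] (M N : ModuleCat R) (n : ℕ) : Prop :=
  ∃ (P : ℕ → ModuleCat R) (d : ∀ i, P (i + 1) →ₗ[R] P i)
    (_ : (P 0 : Type) ≃ₗ[R] N) (_ : (M : Type) ≃ₗ[R] P (n + 1)),
    (∀ i, 1 ≤ i → i ≤ n → Module.Projective R (P i)) ∧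
    Function.Surjective (d 0) ∧ Function.Injective (d n) ∧
    ∀ i < n, LinearMap.range (d (i + 1)) = LinearMap.ker (d i)

/-- The regular bimodule `B` as a module over the enveloping algebra `B ⊗[k] Bᵐᵒᵖ`. -/
noncomputable def regularBimodule (k B : Type) [Field k] [Ring B] [Algebra k B] :
    ModuleCat (B ⊗[k] Bᵐᵒᵖ) :=
  letI : Module (B ⊗[k] Bᵐᵒᵖ) B := TensorProduct.Algebra.module
  ModuleCat.of _ B

/-- The twisted bimodule `₁B_φ` (underlying set `B`, right action twisted by `φ`,
i.e. `a • x • b = a * x * φ b`) as a module over the enveloping algebra `B ⊗[k] Bᵐᵒᵖ`. -/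
noncomputable def twistedBimodule (k B : Type) [Field k] [Ring B] [Algebra k B]
    (φ : B ≃ₐ[k] B) : ModuleCat (B ⊗[k] Bᵐᵒᵖ) :=
  letI : Module (B ⊗[k] Bᵐᵒᵖ) B := TensorProduct.Algebra.module
  letI : Module (B ⊗[k] Bᵐᵒᵖ) B :=
    Module.compHom B
      (Algebra.TensorProduct.map (AlgHom.id k B) (AlgEquiv.op φ).toAlgHom).toRingHom
  ModuleCat.of _ B

/-- A finite-dimensional `k`-algebra `B` is twisted periodic if there are `n ≥ 1`, an algebra
automorphism `φ` of `B`, and an exact sequence `0 → ₁B_φ → P_{n-1} → ⋯ → P_0 → B → 0` of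
bimodules with all `P_i` projective over `B ⊗[k] Bᵐᵒᵖ`. -/
noncomputable def IsTwistedPeriodicAlgebra (k B : Type) [Field k] [Ring B] [Algebra k B] : Prop :=
  ∃ (n : ℕ) (φ : B ≃ₐ[k] B), 1 ≤ n ∧
    HasProjExactSeq (B ⊗[k] Bᵐᵒᵖ) (twistedBimodule k B φ) (regularBimodule k B) n

/-- The dimension over `k` of a module over the `k`-algebra `B`. -/
noncomputable def kDim (k B : Type) [Field k] [Ring B] [Algebra k B]
    (M : Type) [AddCommGroup M] [Module B M] : ℕ :=
  letI : Module k M := Module.compHom M (algebraMap k B)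
  Module.finrank k M

/-- A `B`-module `M` has complexity at most one: there are a constant `C` and a projective
resolution `⋯ → P_1 → P_0 → M → 0` by finitely generated projective `B`-modules with
`dim_k P_t ≤ C` for all `t`. -/
noncomputable def ComplexityLeOne (k B : Type) [Field k] [Ring B] [Algebra k B]
    (M : Type) [AddCommGroup M] [Module B M] : Prop :=
  ∃ (C : ℕ) (P : ℕ → ModuleCat B) (f : ∀ i, P (i + 1) →ₗ[B] P i) (π : (P 0 : Type) →ₗ[B] M),
    (∀ i, Module.Projective B (P i)) ∧ (∀ i, Module.Finite B (P i)) ∧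
    (∀ i, kDim k B (P i) ≤ C) ∧
    Function.Surjective π ∧ LinearMap.range (f 0) = LinearMap.ker π ∧
    ∀ i, LinearMap.range (f (i + 1)) = LinearMap.ker (f i)

/-!
All terms of the sequence `0 → B_φ → P_{n-1} → ⋯ → P_0 → B → 0` are projective as right
`B`-modules, so it splits on the right and stays exact after applying `- ⊗_B M`. Hence
`B_φ ⊗_B M` is an `n`-th syzygy of `M`; its dimension is at most `dim M` because `B_φ` is generated
by one element on the right. By Schanuel's lemma the `P_i` may be taken finite-dimensional, and if
`r` bounds their dimensions, then the `P_i ⊗_B M` are projective of dimension at most `r * dim M`.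
The bound is the same for `B_φ ⊗_B M` in place of `M`, so splicing the resulting sequences gives
the resolution.
-/

universe u

section Exact

variable {R L P Q N : Type*} [Ring R] [AddCommGroup L] [AddCommGroup P] [AddCommGroup Q]
  [AddCommGroup N] [Module R L] [Module R P] [Module R Q] [Module R N]

theorem exists_splitting_of_projective [Module.Projective R N] {i : L →ₗ[R] P} {p : P →ₗ[R] N}
    (hi : Function.Injective i) (hip : Function.Exact i p) (hp : Function.Surjective p) :
    ∃ (r : P →ₗ[R] L) (s : N →ₗ[R] P), r ∘ₗ i = .id ∧ p ∘ₗ s = .id ∧ i ∘ₗ r + s ∘ₗ p = .id := by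
  obtain ⟨s, hs⟩ := Module.projective_lifting_property p .id hp
  obtain ⟨e, rfl, rfl⟩ := hip.splitSurjectiveEquiv hi ⟨s, hs⟩
  refine ⟨.fst R L N ∘ₗ e, e.symm ∘ₗ .inr R L N, ?_, ?_, ?_⟩ <;> ext x
  · simp
  · simp
  · exact e.injective (by simp)

theorem projective_of_exact [Module.Projective R P] [Module.Projective R N] {i : L →ₗ[R] P}
    {p : P →ₗ[R] N} (hi : Function.Injective i) (hip : Function.Exact i p)
    (hp : Function.Surjective p) : Module.Projective R L :=
  have ⟨r, _, hr, _, _⟩ := exists_splitting_of_projective hi hip hp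
  .of_split i r hr

theorem nonempty_prod_equiv_eqLocus [Module.Projective R Q] {i : L →ₗ[R] P} {p : P →ₗ[R] N}
    (hi : Function.Injective i) (hip : Function.Exact i p) (hp : Function.Surjective p)
    (q : Q →ₗ[R] N) :
    Nonempty ((L × Q) ≃ₗ[R] LinearMap.eqLocus (p ∘ₗ .fst R P Q) (q ∘ₗ .snd R P Q)) := by
  obtain ⟨s, hs⟩ := Module.projective_lifting_property p q hp
  replace hs (y : Q) : p (s y) = q y := LinearMap.congr_fun hs y
  let f : L × Q →ₗ[R] P × Q := (i.coprod s).prod (.snd R L Q)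
  have hf (z : L × Q) :
      f z ∈ LinearMap.eqLocus (p ∘ₗ .fst R P Q) (q ∘ₗ .snd R P Q) := by
    simp [f, hs, hip.apply_apply_eq_zero]
  refine ⟨.ofBijective (f.codRestrict _ hf) ⟨?_, ?_⟩⟩
  · rw [LinearMap.injective_codRestrict_iff]
    rintro ⟨l, y⟩ ⟨l', y'⟩ h
    obtain ⟨h₁, rfl⟩ : i l + s y = i l' + s y' ∧ y = y' := by simpa [f] using h
    rw [hi (add_right_cancel h₁)]
  · rintro ⟨⟨x, y⟩, hxy⟩
    have hxy : p x = q y := hxy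
    obtain ⟨l, hl⟩ := (hip (x - s y)).1 (by simp [hs, hxy])
    exact ⟨(l, y), Subtype.ext (by simp [f, hl])⟩

variable {K : Type*} [AddCommGroup K] [Module R K]

-- Both sides are the fibre product of `P` and `Q` over `N`.
theorem schanuel [Module.Projective R P] [Module.Projective R Q]
    {i : L →ₗ[R] P} {p : P →ₗ[R] N} (hi : Function.Injective i) (hip : Function.Exact i p)
    (hp : Function.Surjective p) {j : K →ₗ[R] Q} {q : Q →ₗ[R] N} (hj : Function.Injective j)
    (hjq : Function.Exact j q) (hq : Function.Surjective q) :
    Nonempty ((L × Q) ≃ₗ[R] (K × P)) := by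
  obtain ⟨e⟩ := nonempty_prod_equiv_eqLocus hi hip hp q
  obtain ⟨e'⟩ := nonempty_prod_equiv_eqLocus hj hjq hq p
  have hswap : (LinearMap.eqLocus (p ∘ₗ .fst R P Q) (q ∘ₗ .snd R P Q)).map
      (LinearEquiv.prodComm R P Q).toLinearMap =
        LinearMap.eqLocus (q ∘ₗ .fst R Q P) (p ∘ₗ .snd R Q P) := by
    ext ⟨y, x⟩
    simp [eq_comm]
  exact ⟨e ≪≫ₗ (LinearEquiv.prodComm R P Q).submoduleMap _ ≪≫ₗ .ofEq _ _ hswap ≪≫ₗ e'.symm⟩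

end Exact

/-- `IsSyzygy 𝒞 n N K` says that `K` is an `n`-th syzygy of `N` relative to the class `𝒞`: there is
an exact sequence `0 → K → P_n → ⋯ → P_1 → N → 0` with all `P_i` in `𝒞`. It is encoded as a
chain of `n` short exact sequences, ending in an isomorphism. -/
inductive IsSyzygy {R : Type u} [Ring R] (𝒞 : ModuleCat.{u} R → Prop) :
    ℕ → ModuleCat.{u} R → ModuleCat.{u} R → Prop
  | zero {N K : ModuleCat.{u} R} (e : N ≃ₗ[R] K) : IsSyzygy 𝒞 0 N K
  | succ {n : ℕ} {N P L K : ModuleCat.{u} R} (hP : 𝒞 P) (i : L →ₗ[R] P) (p : P →ₗ[R] N)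
      (hi : Function.Injective i) (hip : Function.Exact i p) (hp : Function.Surjective p)
      (hL : IsSyzygy 𝒞 n L K) : IsSyzygy 𝒞 (n + 1) N K

namespace IsSyzygy

variable {R : Type u} [Ring R] {𝒞 𝒟 : ModuleCat.{u} R → Prop} {n : ℕ} {N N' K : ModuleCat.{u} R}

theorem of_equiv (h : IsSyzygy 𝒞 n N K) (e : N ≃ₗ[R] N') : IsSyzygy 𝒞 n N' K := by
  cases h with
  | zero e' => exact .zero (e.symm ≪≫ₗ e')
  | succ hP i p hi hip hp hL =>
    exact .succ hP i (e.toLinearMap ∘ₗ p) hi (hip.comp_injective _ e.injective (map_zero e))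
      (e.surjective.comp hp) hL

theorem mono (h𝒞 : ∀ P, 𝒞 P → 𝒟 P) (h : IsSyzygy 𝒞 n N K) : IsSyzygy 𝒟 n N K := by
  induction h with
  | zero e => exact .zero e
  | succ hP i p hi hip hp _ ih => exact .succ (h𝒞 _ hP) i p hi hip hp ih

theorem exists_bound {𝒟 : ℕ → ModuleCat.{u} R → Prop} (h𝒟 : Monotone 𝒟)
    (h𝒞 : ∀ P, 𝒞 P → ∃ r, 𝒟 r P) (h : IsSyzygy 𝒞 n N K) : ∃ r, IsSyzygy (𝒟 r) n N K := by
  induction h with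
  | zero e => exact ⟨0, .zero e⟩
  | succ hP i p hi hip hp _ ih =>
    obtain ⟨r, hr⟩ := h𝒞 _ hP
    obtain ⟨r', hr'⟩ := ih
    exact ⟨max r r', .succ (h𝒟 (le_max_left r r') _ hr) i p hi hip hp
      (hr'.mono (h𝒟 (le_max_right r r')))⟩

section Projective

variable (F : Type u) [AddCommGroup F] [Module R F] [Module.Projective R F]

theorem prod_projective (h : IsSyzygy (fun P ↦ Module.Projective R P) (n + 1) N K) :
    IsSyzygy (fun P ↦ Module.Projective R P) (n + 1) (.of R (N × F)) K := by
  cases h with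
  | succ hP i p hi hip hp hL =>
    refine .succ (P := .of R (_ × F)) (inferInstanceAs (Module.Projective R (_ × F)))
      (.inl R _ F ∘ₗ i) (p.prodMap .id) (LinearMap.inl_injective.comp hi) ?_
      (hp.prodMap Function.surjective_id) hL
    rintro ⟨x, y⟩
    have hx : p x = 0 ↔ ∃ l, i l = x := hip x
    simp [Prod.ext_iff, hx, @eq_comm F 0 y]

theorem of_prod_projective
    (h : IsSyzygy (fun P ↦ Module.Projective R P) (n + 1) (.of R (N × F)) K) :
    IsSyzygy (fun P ↦ Module.Projective R P) (n + 1) N K := by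
  cases h with
  | @succ _ _ P L _ hP i p hi hip hp hL =>
    let p₂ : P →ₗ[R] F := .snd R N F ∘ₗ p
    have hpi (l : L) : p (i l) = 0 := hip.apply_apply_eq_zero l
    have hker : Module.Projective R (LinearMap.ker p₂) :=
      projective_of_exact (Submodule.subtype_injective _) (LinearMap.exact_subtype_ker_map p₂)
        (Prod.snd_surjective.comp hp)
    refine .succ (P := .of R (LinearMap.ker p₂)) hker
      (i.codRestrict _ fun l ↦ by simp [p₂, hpi]) (.fst R N F ∘ₗ p ∘ₗ (LinearMap.ker p₂).subtype)
      ((LinearMap.injective_codRestrict_iff _).2 hi) ?_ ?_ hL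
    · rintro ⟨x, hx⟩
      have hpx : p x = 0 ↔ ∃ l, i l = x := hip x
      have hx₁ : (p x).1 = 0 ↔ p x = 0 :=
        ⟨fun h ↦ Prod.ext h (LinearMap.mem_ker.1 hx), congrArg Prod.fst⟩
      simp [Subtype.ext_iff, hx₁, hpx]
    · intro y
      obtain ⟨x, hx⟩ := hp (y, 0)
      exact ⟨⟨x, by simp [p₂, hx]⟩, by simp [hx]⟩

end Projective

theorem finite_of_isNoetherianRing [IsNoetherianRing R] [Module.Finite R N] [Module.Finite R K]
    (h : IsSyzygy (fun P ↦ Module.Projective R P) n N K) :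
    IsSyzygy (fun P ↦ Module.Projective R P ∧ Module.Finite R P) n N K := by
  induction n generalizing N with
  | zero =>
    cases h with
    | zero e => exact .zero e
  | succ n ih =>
    cases h with
    | @succ _ _ P L _ hP i p hi hip hp hL =>
      cases n with
      | zero =>
        cases hL with
        | zero e =>
          have : Module.Finite R L := .equiv e.symm
          exact .succ ⟨hP, .of_exact hip hp⟩ i p hi hip hp (.zero e)
      | succ n =>
        obtain ⟨m, q, hq⟩ := Module.Finite.exists_fin' R N
        have hj := Submodule.subtype_injective (LinearMap.ker q)
        have hjq := LinearMap.exact_subtype_ker_map q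
        obtain ⟨e⟩ := schanuel hi hip hp hj hjq hq
        have hker : IsSyzygy (fun P ↦ Module.Projective R P) (n + 1)
            (.of R (LinearMap.ker q)) K :=
          ((hL.prod_projective (Fin m → R)).of_equiv e).of_prod_projective P
        exact .succ (P := .of R (Fin m → R)) ⟨inferInstanceAs (Module.Projective R (Fin m → R)),
          inferInstanceAs (Module.Finite R (Fin m → R))⟩ _ q hj hjq hq (ih hker)

theorem exists_cover (h𝒟 : ∀ N, 𝒟 N → ∃ m K, 𝒟 K ∧ IsSyzygy 𝒞 (m + 1) N K)
    (hK : 𝒟 K) (h : IsSyzygy 𝒞 n N K) :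
    ∃ (P : ModuleCat.{u} R) (p : P →ₗ[R] N), 𝒞 P ∧ Function.Surjective p ∧
      ∃ m K', 𝒟 K' ∧ IsSyzygy 𝒞 m (.of R (LinearMap.ker p)) K' := by
  wlog hn : n ≠ 0 generalizing n K
  · obtain rfl := not_not.1 hn
    obtain ⟨m, K', hK', hKK'⟩ := h𝒟 K hK
    cases h with
    | zero e => exact this hK' (hKK'.of_equiv e.symm) m.succ_ne_zero
  cases h with
  | zero => contradiction
  | succ hP i p hi hip hp hL =>
    have e := LinearEquiv.ofInjective i hi ≪≫ₗ .ofEq _ _ hip.linearMap_ker_eq.symm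
    exact ⟨_, p, hP, hp, _, K, hK, hL.of_equiv e⟩

end IsSyzygy

theorem exists_resolution_of_exists_cover {R : Type u} [Ring R] {𝒞 𝒢 : ModuleCat.{u} R → Prop}
    (h𝒢 : ∀ N, 𝒢 N → ∃ (P : ModuleCat.{u} R) (p : P →ₗ[R] N),
      𝒞 P ∧ Function.Surjective p ∧ 𝒢 (.of R (LinearMap.ker p)))
    {N : ModuleCat.{u} R} (hN : 𝒢 N) :
    ∃ (P : ℕ → ModuleCat.{u} R) (f : ∀ i, P (i + 1) →ₗ[R] P i) (π : P 0 →ₗ[R] N),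
      (∀ i, 𝒞 (P i)) ∧ Function.Surjective π ∧ LinearMap.range (f 0) = LinearMap.ker π ∧
      ∀ i, LinearMap.range (f (i + 1)) = LinearMap.ker (f i) := by
  choose P p hP hp hker using h𝒢
  let Ω : ℕ → {N // 𝒢 N} := Nat.rec ⟨N, hN⟩ fun _ N ↦ ⟨_, hker N.1 N.2⟩
  let π (i : ℕ) : P _ (Ω i).2 →ₗ[R] (Ω i).1 := p _ (Ω i).2
  have hπ (i : ℕ) : Function.Surjective (π i) := hp _ _
  let f (i : ℕ) : P _ (Ω (i + 1)).2 →ₗ[R] P _ (Ω i).2 :=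
    (LinearMap.ker (π i)).subtype ∘ₗ π (i + 1)
  have hrange (i : ℕ) : LinearMap.range (f i) = LinearMap.ker (π i) :=
    (LinearMap.range_comp_of_range_eq_top _ (LinearMap.range_eq_top.2 (hπ (i + 1)))).trans
      (Submodule.range_subtype _)
  have hkerf (i : ℕ) : LinearMap.ker (f i) = LinearMap.ker (π (i + 1)) :=
    LinearMap.ker_comp_of_ker_eq_bot _ (Submodule.ker_subtype _)
  exact ⟨fun i ↦ P _ (Ω i).2, f, π 0, fun i ↦ hP _ _, hπ 0, hrange 0,
    fun i ↦ (hrange (i + 1)).trans (hkerf i).symm⟩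

theorem HasProjExactSeq.isSyzygy {R : Type} [Ring R] {M N : ModuleCat R} {n : ℕ}
    (h : HasProjExactSeq R M N n) : IsSyzygy (fun P ↦ Module.Projective R P) n N M := by
  obtain ⟨P, d, eN, eM, hP, hd₀, hdn, hd⟩ := h
  have hrange (j i : ℕ) (hij : i + j = n) :
      IsSyzygy (fun P ↦ Module.Projective R P) j (.of R (LinearMap.range (d i))) M := by
    induction j generalizing i with
    | zero =>
      obtain rfl : i = n := hij
      exact .zero ((LinearEquiv.ofInjective (d i) hdn).symm ≪≫ₗ eM.symm)
    | succ j ih =>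
      refine .succ (hP (i + 1) (by lia) (by lia)) (LinearMap.range (d (i + 1))).subtype
        (d i).rangeRestrict (Submodule.subtype_injective _) ?_
        (LinearMap.surjective_rangeRestrict _) (ih (i + 1) (by lia))
      rw [LinearMap.exact_iff, LinearMap.ker_rangeRestrict, Submodule.range_subtype,
        hd i (by lia)]
  exact (hrange n 0 (Nat.zero_add n)).of_equiv
    (.ofTop _ (LinearMap.range_eq_top.2 hd₀) ≪≫ₗ eN)

open MulOpposite

section BalancedTensor

variable (k A B X M : Type*) [CommRing k] [Ring A] [Ring B] [Algebra k A]
  [AddCommGroup X] [Module k X] [Module A X] [Module Bᵐᵒᵖ X] [IsScalarTower k A X]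
  [AddCommGroup M] [Module k M] [Module B M]

/-- The submodule of `X ⊗[k] M` generated by the relations `x b ⊗ m = x ⊗ b m`. -/
def balancedRelations : Submodule A (X ⊗[k] M) :=
  .span A (.range fun t : B × X × M ↦ (op t.1 • t.2.1) ⊗ₜ t.2.2 - t.2.1 ⊗ₜ (t.1 • t.2.2))

/-- The tensor product `X ⊗_B M` of an `A`-`B`-bimodule `X` with a left `B`-module `M`, as a left
`A`-module. It is encoded as a quotient of `X ⊗[k] M` because Mathlib's tensor product requires a
commutative base ring. -/
abbrev BalancedTensor : Type _ := (X ⊗[k] M) ⧸ balancedRelations k A B X M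

namespace BalancedTensor

variable {k A B X M}

/-- The pure tensor `x ⊗ m` in `X ⊗_B M`, as a bilinear map. -/
def tmul : X →ₗ[A] M →ₗ[k] BalancedTensor k A B X M :=
  AlgebraTensorModule.curry (balancedRelations k A B X M).mkQ

theorem op_smul_tmul (b : B) (x : X) (m : M) :
    tmul (k := k) (A := A) (B := B) (op b • x) m = tmul x (b • m) :=
  (Submodule.Quotient.eq _).2 (Submodule.subset_span ⟨(b, x, m), rfl⟩)

section Lift

variable {V : Type*} [AddCommGroup V] [Module k V] [Module A V] [IsScalarTower k A V]

/-- The map `X ⊗_B M → V` induced by a `B`-balanced bilinear map `X × M → V`. -/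
def lift (f : X →ₗ[A] M →ₗ[k] V) (hf : ∀ (b : B) x m, f (op b • x) m = f x (b • m)) :
    BalancedTensor k A B X M →ₗ[A] V :=
  (balancedRelations k A B X M).liftQ (AlgebraTensorModule.lift f) <| by
    rw [balancedRelations, Submodule.span_le]
    rintro _ ⟨⟨b, x, m⟩, rfl⟩
    simp [hf]

@[simp]
theorem lift_tmul (f : X →ₗ[A] M →ₗ[k] V) (hf : ∀ (b : B) x m, f (op b • x) m = f x (b • m))
    (x : X) (m : M) : lift f hf (tmul x m) = f x m :=
  rfl

theorem hom_ext {f g : BalancedTensor k A B X M →ₗ[A] V}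
    (h : ∀ x m, f (tmul x m) = g (tmul x m)) : f = g :=
  Submodule.linearMap_qext _ (AlgebraTensorModule.ext h)

end Lift

theorem exists_tmul_eq_of_cyclic {x : X} (hx : ∀ y : X, ∃ b : B, op b • x = y)
    (w : BalancedTensor k A B X M) : ∃ m : M, tmul x m = w := by
  obtain ⟨z, rfl⟩ := Submodule.Quotient.mk_surjective _ w
  induction z with
  | zero => exact ⟨0, map_zero _⟩
  | tmul y m =>
    obtain ⟨b, rfl⟩ := hx y
    exact ⟨b • m, (op_smul_tmul b x m).symm⟩
  | add z z' hz hz' =>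
    obtain ⟨m, hm⟩ := hz
    obtain ⟨m', hm'⟩ := hz'
    exact ⟨m + m', by rw [map_add, hm, hm', Submodule.Quotient.mk_add]⟩

theorem nonempty_equiv_of_regular [Algebra k B] [IsScalarTower k B M] [Module B X]
    [IsScalarTower k B X] (e : X ≃ₗ[B] B) (he : ∀ (b : B) x, e (op b • x) = e x * b) :
    Nonempty (BalancedTensor k B B X M ≃ₗ[B] M) := by
  let f : BalancedTensor k B B X M →ₗ[B] M :=
    lift (.toSpanSingleton B (M →ₗ[k] M) .id ∘ₗ e.toLinearMap) (by simp [he, mul_smul])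
  have hf (m : M) : f (tmul (e.symm 1) m) = m := by simp [f]
  have hcyclic (y : X) : ∃ b : B, op b • e.symm 1 = y := ⟨e y, e.injective (by simp [he])⟩
  refine ⟨.ofBijective f ⟨?_, fun m ↦ ⟨_, hf m⟩⟩⟩
  refine Function.LeftInverse.injective (g := fun m ↦ tmul (e.symm 1) m) fun w ↦ ?_
  obtain ⟨m, rfl⟩ := exists_tmul_eq_of_cyclic hcyclic w
  rw [hf]

variable {Y Z : Type*} [AddCommGroup Y] [Module k Y] [Module A Y] [Module Bᵐᵒᵖ Y]
  [IsScalarTower k A Y] [AddCommGroup Z] [Module k Z] [Module A Z] [Module Bᵐᵒᵖ Z]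
  [IsScalarTower k A Z]

theorem rTensor_mem_balancedRelations [SMulCommClass A Bᵐᵒᵖ X] {f : X →ₗ[k] Y}
    (hf : ∀ (b : B) x, f (op b • x) = op b • f x) {z : X ⊗[k] M}
    (hz : z ∈ balancedRelations k A B X M) : f.rTensor M z ∈ balancedRelations k A B Y M := by
  induction hz using Submodule.closure_induction with
  | zero => simp
  | add _ _ _ _ h₁ h₂ => simpa using add_mem h₁ h₂
  | smul_mem a _ hx =>
    obtain ⟨⟨b, x, m⟩, rfl⟩ := hx
    refine Submodule.subset_span ⟨(b, f (a • x), m), ?_⟩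
    simp [smul_sub, TensorProduct.smul_tmul', smul_comm a (op b) x, hf]

variable [SMulCommClass A Bᵐᵒᵖ X]

variable (k M) in
/-- The map `X ⊗_B M → Y ⊗_B M` induced by a map of bimodules `X → Y`. -/
def map (f : X →ₗ[A] Y) (hf : ∀ (b : B) x, f (op b • x) = op b • f x) :
    BalancedTensor k A B X M →ₗ[A] BalancedTensor k A B Y M :=
  Submodule.mapQ _ _ (AlgebraTensorModule.rTensor k M f) fun _ hz ↦
    rTensor_mem_balancedRelations (f := f.restrictScalars k) hf hz

@[simp]
theorem map_tmul (f : X →ₗ[A] Y) (hf : ∀ (b : B) x, f (op b • x) = op b • f x) (x : X) (m : M) :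
    map k M f hf (tmul x m) = tmul (f x) m :=
  rfl

variable {i : X →ₗ[A] Y} {p : Y →ₗ[A] Z} {hi : ∀ (b : B) x, i (op b • x) = op b • i x}
  {hp : ∀ (b : B) y, p (op b • y) = op b • p y} {r : Y →ₗ[k] X} {s : Z →ₗ[k] Y}
  [SMulCommClass A Bᵐᵒᵖ Y]

theorem map_surjective (h : Function.Surjective p) : Function.Surjective (map k M p hp) :=
  Function.Surjective.of_comp (g := Submodule.Quotient.mk) <|
    (Submodule.Quotient.mk_surjective _).comp
      (LinearMap.rTensor_surjective M (g := p.restrictScalars k) h)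

theorem map_injective (hr : ∀ (b : B) y, r (op b • y) = op b • r y) (hri : ∀ x, r (i x) = x) :
    Function.Injective (map k M i hi) := by
  rw [injective_iff_map_eq_zero]
  intro w hw
  obtain ⟨z, rfl⟩ := Submodule.Quotient.mk_surjective _ w
  have hretract : r.rTensor M ∘ₗ (i.restrictScalars k).rTensor M = .id :=
    TensorProduct.ext' fun x m ↦ by simp [hri]
  have hz := rTensor_mem_balancedRelations hr ((Submodule.Quotient.mk_eq_zero _).1 hw)
  rwa [show r.rTensor M (AlgebraTensorModule.rTensor k M i z) = z from
    LinearMap.congr_fun hretract z, ← Submodule.Quotient.mk_eq_zero] at hz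

theorem map_exact [SMulCommClass A Bᵐᵒᵖ Z] (hs : ∀ (b : B) z, s (op b • z) = op b • s z)
    (hpi : ∀ x, p (i x) = 0) (h : ∀ y, i (r y) + s (p y) = y) :
    Function.Exact (map k M i hi) (map k M p hp) := by
  refine fun w ↦ ⟨fun hw ↦ ?_, ?_⟩
  · obtain ⟨z, rfl⟩ := Submodule.Quotient.mk_surjective _ w
    have hsplit : (i.restrictScalars k).rTensor M ∘ₗ r.rTensor M +
        s.rTensor M ∘ₗ (p.restrictScalars k).rTensor M = .id :=
      TensorProduct.ext' fun y m ↦ by simp [← TensorProduct.add_tmul, h]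
    have hz := rTensor_mem_balancedRelations hs ((Submodule.Quotient.mk_eq_zero _).1 hw)
    have hsub : z - AlgebraTensorModule.rTensor k M i (r.rTensor M z) =
        s.rTensor M (AlgebraTensorModule.rTensor k M p z) :=
      sub_eq_of_eq_add' (LinearMap.congr_fun hsplit z).symm
    exact ⟨Submodule.Quotient.mk (r.rTensor M z),
      ((Submodule.Quotient.eq _).2 (hsub ▸ hz)).symm⟩
  · have hcomp : map k M p hp ∘ₗ map k M i hi = 0 := hom_ext fun x m ↦ by simp [hpi]
    rintro ⟨w, rfl⟩
    exact LinearMap.congr_fun hcomp w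

end BalancedTensor

end BalancedTensor

section Dimension

variable {k A B X M : Type*} [Field k] [Ring A] [Ring B] [Algebra k A] [AddCommGroup X]
  [Module k X] [Module A X] [Module Bᵐᵒᵖ X] [IsScalarTower k A X] [AddCommGroup M] [Module k M]
  [Module B M]

namespace BalancedTensor

variable (k A B X M) in
/-- The projection `X ⊗[k] M → X ⊗_B M`. -/
def proj : X ⊗[k] M →ₗ[k] BalancedTensor k A B X M :=
  (balancedRelations k A B X M).mkQ.restrictScalars k

theorem proj_surjective : Function.Surjective (proj k A B X M) :=
  Submodule.mkQ_surjective (balancedRelations k A B X M)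

variable [Module.Finite k M]

instance finite [Module.Finite k X] : Module.Finite k (BalancedTensor k A B X M) :=
  .of_surjective (proj k A B X M) proj_surjective

theorem finrank_le_mul [Module.Finite k X] :
    Module.finrank k (BalancedTensor k A B X M) ≤ Module.finrank k X * Module.finrank k M :=
  (LinearMap.finrank_le_finrank_of_surjective (proj_surjective (A := A) (B := B))).trans_eq
    Module.finrank_tensorProduct

theorem finrank_le_of_cyclic {x : X} (hx : ∀ y : X, ∃ b : B, op b • x = y) :
    Module.finrank k (BalancedTensor k A B X M) ≤ Module.finrank k M :=
  LinearMap.finrank_le_finrank_of_surjective (f := tmul x) (exists_tmul_eq_of_cyclic hx)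

end BalancedTensor

end Dimension

theorem projective_of_isScalarTower (S R X : Type*) [Ring S] [Ring R] [Module S R]
    [AddCommGroup X] [Module R X] [Module S X] [IsScalarTower S R R] [IsScalarTower S R X]
    [Module.Free S R] [Module.Projective R X] : Module.Projective S X := by
  obtain ⟨s, hs⟩ := Module.projective_def.1 ‹Module.Projective R X›
  exact .of_split (s.restrictScalars S) ((Finsupp.linearCombination R id).restrictScalars S)
    (LinearMap.ext hs)

section Bimodule

open scoped ModuleCat

variable {k A B : Type*} [Field k] [Ring A] [Ring B] [Algebra k A] [Algebra k B]
  (X : ModuleCat (A ⊗[k] Bᵐᵒᵖ))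

/-- The left `A`-module underlying an `A`-`B`-bimodule. -/
noncomputable instance leftModule : Module A X :=
  .compHom X (Algebra.TensorProduct.includeLeft : A →ₐ[k] A ⊗[k] Bᵐᵒᵖ).toRingHom

/-- The right `B`-module underlying an `A`-`B`-bimodule. -/
noncomputable instance rightModule : Module Bᵐᵒᵖ X :=
  .compHom X (Algebra.TensorProduct.includeRight : Bᵐᵒᵖ →ₐ[k] A ⊗[k] Bᵐᵒᵖ).toRingHom

variable {X}

theorem left_smul_def (a : A) (x : X) : a • x = (a ⊗ₜ 1 : A ⊗[k] Bᵐᵒᵖ) • x :=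
  rfl

theorem right_smul_def (b : Bᵐᵒᵖ) (x : X) : b • x = (1 ⊗ₜ b : A ⊗[k] Bᵐᵒᵖ) • x :=
  rfl

theorem tmul_smul_eq (a : A) (b : Bᵐᵒᵖ) (x : X) : (a ⊗ₜ b : A ⊗[k] Bᵐᵒᵖ) • x = a • b • x := by
  simp [left_smul_def, right_smul_def, smul_smul]

instance smulCommClass_left_right : SMulCommClass A Bᵐᵒᵖ X where
  smul_comm a b x := by simp [left_smul_def, right_smul_def, smul_smul]

instance isScalarTower_left : IsScalarTower k A X :=
  .of_algebraMap_smul fun c x ↦ algebraMap_smul (A ⊗[k] Bᵐᵒᵖ) c x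

instance isScalarTower_right : IsScalarTower k Bᵐᵒᵖ X :=
  .of_algebraMap_smul fun c x ↦ by
    rw [right_smul_def, Algebra.algebraMap_eq_smul_one, ← TensorProduct.smul_tmul,
      ← Algebra.algebraMap_eq_smul_one]
    exact algebraMap_smul (A ⊗[k] Bᵐᵒᵖ) c x

variable {Y : ModuleCat (A ⊗[k] Bᵐᵒᵖ)}

/-- A bimodule map, as a map of left modules. -/
noncomputable def leftHom (f : X →ₗ[A ⊗[k] Bᵐᵒᵖ] Y) : X →ₗ[A] Y where
  __ := f
  map_smul' a := f.map_smul (a ⊗ₜ 1)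

/-- A bimodule map, as a map of right modules. -/
noncomputable def rightHom (f : X →ₗ[A ⊗[k] Bᵐᵒᵖ] Y) : X →ₗ[Bᵐᵒᵖ] Y where
  __ := f
  map_smul' b := f.map_smul (1 ⊗ₜ b)

theorem projective_right [Module.Projective (A ⊗[k] Bᵐᵒᵖ) X] : Module.Projective Bᵐᵒᵖ X := by
  let : Module Bᵐᵒᵖ (A ⊗[k] Bᵐᵒᵖ) :=
    .compHom _ (Algebra.TensorProduct.includeRight : Bᵐᵒᵖ →ₐ[k] A ⊗[k] Bᵐᵒᵖ).toRingHom
  have smul_def (b : Bᵐᵒᵖ) (z : A ⊗[k] Bᵐᵒᵖ) : b • z = 1 ⊗ₜ b * z := rfl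
  let e : Bᵐᵒᵖ ⊗[k] A ≃ₗ[Bᵐᵒᵖ] A ⊗[k] Bᵐᵒᵖ :=
    { TensorProduct.comm k Bᵐᵒᵖ A with
      map_smul' b z := by
        induction z with
        | zero => simp
        | tmul c a => simp [smul_def, TensorProduct.smul_tmul']
        | add z w hz hw => simp_all }
  have : IsScalarTower Bᵐᵒᵖ (A ⊗[k] Bᵐᵒᵖ) (A ⊗[k] Bᵐᵒᵖ) := ⟨fun b ↦ mul_assoc (1 ⊗ₜ b)⟩
  have : IsScalarTower Bᵐᵒᵖ (A ⊗[k] Bᵐᵒᵖ) X := ⟨fun b ↦ mul_smul (1 ⊗ₜ b)⟩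
  have : Module.Free Bᵐᵒᵖ (A ⊗[k] Bᵐᵒᵖ) := .of_equiv e
  exact projective_of_isScalarTower Bᵐᵒᵖ (A ⊗[k] Bᵐᵒᵖ) X

section Tensor

variable {M : Type*} [AddCommGroup M] [Module k M] [Module B M] {Z : ModuleCat (A ⊗[k] Bᵐᵒᵖ)}

variable (M) in
/-- The map `X ⊗_B M → Y ⊗_B M` induced by a map `X → Y` of bimodules. -/
noncomputable def tensorHom (f : X →ₗ[A ⊗[k] Bᵐᵒᵖ] Y) :
    BalancedTensor k A B X M →ₗ[A] BalancedTensor k A B Y M :=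
  BalancedTensor.map k M (leftHom f) fun b ↦ (rightHom f).map_smul (op b)

theorem tensorHom_injective_of_leftInverse {f : X →ₗ[A ⊗[k] Bᵐᵒᵖ] Y} (r : Y →ₗ[Bᵐᵒᵖ] X)
    (hr : Function.LeftInverse r f) : Function.Injective (tensorHom M f) :=
  BalancedTensor.map_injective (r := r.restrictScalars k) (fun b ↦ r.map_smul (op b)) hr

theorem tensorHom_exact_of_split {i : X →ₗ[A ⊗[k] Bᵐᵒᵖ] Y} {p : Y →ₗ[A ⊗[k] Bᵐᵒᵖ] Z}
    {r : Y →ₗ[Bᵐᵒᵖ] X} {s : Z →ₗ[Bᵐᵒᵖ] Y} (hpi : ∀ x, p (i x) = 0)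
    (hrs : ∀ y, i (r y) + s (p y) = y) : Function.Exact (tensorHom M i) (tensorHom M p) :=
  BalancedTensor.map_exact (r := r.restrictScalars k) (s := s.restrictScalars k)
    (fun b ↦ s.map_smul (op b)) hpi hrs

variable [IsScalarTower k B M]

/-- The map `A ⊗[k] Bᵐᵒᵖ → A ⊗[k] M`, `a ⊗ b ↦ a ⊗ b m`, depending linearly on `m`. -/
noncomputable def rightAct : M →ₗ[k] A ⊗[k] Bᵐᵒᵖ →ₗ[A] A ⊗[k] M :=
  AlgebraTensorModule.lTensor A A ∘ₗ
    ((Algebra.lsmul k k M).toLinearMap ∘ₗ (opLinearEquiv k).symm.toLinearMap).flip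

@[simp]
theorem rightAct_tmul (m : M) (a : A) (b : Bᵐᵒᵖ) :
    rightAct m (a ⊗ₜ[k] b) = a ⊗ₜ (unop b • m) := by
  simp [rightAct]

theorem rightAct_one_tmul_mul (m : M) (b : B) (z : A ⊗[k] Bᵐᵒᵖ) :
    rightAct m (1 ⊗ₜ op b * z) = rightAct (b • m) z := by
  induction z with
  | zero => simp
  | tmul a c => simp [mul_smul]
  | add z w hz hw => simp_all [mul_add]

variable (M) in
/-- The map `A ⊗[k] M → X ⊗_B M`, `a ⊗ m ↦ a x ⊗ m`. -/
noncomputable def orbitTensor (x : X) : A ⊗[k] M →ₗ[A] BalancedTensor k A B X M :=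
  AlgebraTensorModule.lift (BalancedTensor.tmul ∘ₗ .toSpanSingleton A X x)

theorem orbitTensor_rightAct (x : X) (m : M) (z : A ⊗[k] Bᵐᵒᵖ) :
    orbitTensor M x (rightAct m z) = BalancedTensor.tmul (z • x) m := by
  induction z with
  | zero => simp [zero_smul (A ⊗[k] Bᵐᵒᵖ) x]
  | tmul a b =>
    simp [orbitTensor, tmul_smul_eq, ← BalancedTensor.op_smul_tmul]
  | add z w hz hw => simp_all [add_smul]

-- If `X` is a direct summand of a free bimodule, then `X ⊗_B M` is a direct summand of a direct sum
-- of copies of `A ⊗[k] M`.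
theorem projective_balancedTensor [Module.Projective (A ⊗[k] Bᵐᵒᵖ) X] :
    Module.Projective A (BalancedTensor k A B X M) := by
  obtain ⟨s, hs⟩ := Module.projective_def.1 ‹Module.Projective (A ⊗[k] Bᵐᵒᵖ) X›
  have hs_left (a : A) (x y : X) : s (a • x) y = a • s x y := by
    rw [left_smul_def, map_smul, Finsupp.smul_apply, smul_eq_mul, ← smul_one_mul a (s x y),
      Algebra.TensorProduct.one_def, TensorProduct.smul_tmul', smul_eq_mul, mul_one]
  have hs_right (b : B) (x y : X) : s (op b • x) y = 1 ⊗ₜ op b * s x y := by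
    rw [right_smul_def, map_smul, Finsupp.smul_apply, smul_eq_mul]
  let f : X →ₗ[A] M →ₗ[k] X →₀ A ⊗[k] M :=
    .mk₂' A k (fun x m ↦ Finsupp.mapRange.linearMap (rightAct m) (s x))
      (by intros; simp only [map_add]) (by intros; ext; simp [hs_left])
      (by intros; ext; simp) (by intros; ext; simp)
  let σ : BalancedTensor k A B X M →ₗ[A] (X →₀ A ⊗[k] M) :=
    BalancedTensor.lift (V := X →₀ A ⊗[k] M) f fun b x m ↦ by
      ext; simp [f, hs_right, rightAct_one_tmul_mul]
  let π : (X →₀ A ⊗[k] M) →ₗ[A] BalancedTensor k A B X M := Finsupp.lsum ℕ (orbitTensor M)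
  refine .of_split σ π (BalancedTensor.hom_ext fun x m ↦ ?_)
  calc π (σ (BalancedTensor.tmul x m))
      = (s x).sum fun y z ↦ orbitTensor M y (rightAct m z) := by
        simp [π, σ, f, Finsupp.sum_mapRange_index]
    _ = BalancedTensor.tmul ((s x).sum fun y z ↦ z • y) m := by
        simp [orbitTensor_rightAct, Finsupp.sum]
    _ = BalancedTensor.tmul x m := by
        congr 1
        exact congrArg _ (hs x)

end Tensor

end Bimodule

namespace IsSyzygy

open scoped ModuleCat
open BalancedTensor

variable {k A B : Type u} [Field k] [Ring A] [Ring B] [Algebra k A] [Algebra k B]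
  {X K : ModuleCat.{u} (A ⊗[k] Bᵐᵒᵖ)} {n : ℕ} {𝒞 : ModuleCat.{u} (A ⊗[k] Bᵐᵒᵖ) → Prop}
  {𝒟 : ModuleCat.{u} A → Prop} {M : Type u} [AddCommGroup M] [Module k M] [Module B M]

theorem balancedTensor (h𝒞 : ∀ P, 𝒞 P → Module.Projective Bᵐᵒᵖ P)
    (h𝒟 : ∀ P, 𝒞 P → 𝒟 (.of A (BalancedTensor k A B P M))) (hX : Module.Projective Bᵐᵒᵖ X)
    (h : IsSyzygy 𝒞 n X K) :
    IsSyzygy 𝒟 n (.of A (BalancedTensor k A B X M)) (.of A (BalancedTensor k A B K M)) := by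
  induction h with
  | zero e =>
    exact .zero (.ofBijective (tensorHom M e.toLinearMap) ⟨tensorHom_injective_of_leftInverse
      (rightHom e.symm.toLinearMap) e.symm_apply_apply, map_surjective e.surjective⟩)
  | @succ n X P L K hP i p hi hip hp _ ih =>
    have hP_right := h𝒞 P hP
    have hL := projective_of_exact (i := rightHom i) (p := rightHom p) hi hip hp
    obtain ⟨r, s, hr, -, hrs⟩ :=
      exists_splitting_of_projective (i := rightHom i) (p := rightHom p) hi hip hp
    have hinj := tensorHom_injective_of_leftInverse (M := M) (f := i) r (LinearMap.congr_fun hr)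
    have hexact := tensorHom_exact_of_split (M := M) (i := i) (p := p) hip.apply_apply_eq_zero
      (LinearMap.congr_fun hrs)
    exact .succ (h𝒟 P hP) (tensorHom M i) (tensorHom M p) hinj hexact (map_surjective hp) (ih hL)

end IsSyzygy

section TwistedPeriodic

open scoped ModuleCat

variable {k B : Type} [Field k] [Ring B] [Algebra k B]

theorem kDim_eq_finrank (M : Type) [AddCommGroup M] [Module k M] [Module B M]
    [IsScalarTower k B M] : kDim k B M = Module.finrank k M := by
  have hk : Module.compHom M (algebraMap k B) = ‹Module k M› :=
    Module.ext' _ _ fun c m ↦ algebraMap_smul B c m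
  rw [kDim, hk]

variable (k B) in
/-- The finitely generated `B`-modules of dimension at most `d` over `k`. -/
structure KDimLE (d : ℕ) (N : ModuleCat B) : Prop where
  finite : Module.Finite B N
  kDim_le : kDim k B N ≤ d

variable (k B) in
/-- The finitely generated projective `B`-modules of dimension at most `d` over `k`. -/
structure ProjectiveKDimLE (d : ℕ) (P : ModuleCat B) : Prop extends KDimLE k B d P where
  projective : Module.Projective B P

variable (k B) in
/-- The identification of the regular bimodule with `B`. -/
def regularBimoduleEquiv : regularBimodule k B ≃+ B := .refl B

/-- The identification of the twisted bimodule `B_φ` with `B`. -/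
def twistedBimoduleEquiv (φ : B ≃ₐ[k] B) : twistedBimodule k B φ ≃+ B := .refl B

theorem regularBimoduleEquiv_tmul_smul (a : B) (b : Bᵐᵒᵖ) (x : regularBimodule k B) :
    regularBimoduleEquiv k B ((a ⊗ₜ b : B ⊗[k] Bᵐᵒᵖ) • x) =
      a * (regularBimoduleEquiv k B x * unop b) :=
  TensorProduct.Algebra.smul_def (R := k) (M := B) a b x

theorem twistedBimoduleEquiv_tmul_smul (φ : B ≃ₐ[k] B) (a : B) (b : Bᵐᵒᵖ)
    (x : twistedBimodule k B φ) :
    twistedBimoduleEquiv φ ((a ⊗ₜ b : B ⊗[k] Bᵐᵒᵖ) • x) =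
      a * (twistedBimoduleEquiv φ x * φ (unop b)) :=
  TensorProduct.Algebra.smul_def (R := k) (M := B) a (op (φ (unop b))) x

theorem projective_right_regularBimodule : Module.Projective Bᵐᵒᵖ (regularBimodule k B) :=
  let e : regularBimodule k B ≃ₗ[Bᵐᵒᵖ] Bᵐᵒᵖ :=
    { (regularBimoduleEquiv k B).trans opAddEquiv with
      map_smul' b x := unop_injective <| by
        simp [right_smul_def, regularBimoduleEquiv_tmul_smul] }
  .of_equiv e.symm

theorem nonempty_regularBimodule_balancedTensor_equiv (M : Type*) [AddCommGroup M] [Module k M]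
    [Module B M] [IsScalarTower k B M] :
    Nonempty (BalancedTensor k B B (regularBimodule k B) M ≃ₗ[B] M) :=
  BalancedTensor.nonempty_equiv_of_regular
    { regularBimoduleEquiv k B with
      map_smul' a x := by simp [left_smul_def, regularBimoduleEquiv_tmul_smul] }
    fun b x ↦ by simp [right_smul_def, regularBimoduleEquiv_tmul_smul]

theorem exists_right_generator_regularBimodule :
    ∃ x : regularBimodule k B, ∀ y, ∃ b : B, op b • x = y :=
  ⟨(regularBimoduleEquiv k B).symm 1, fun y ↦ ⟨regularBimoduleEquiv k B y,
    (regularBimoduleEquiv k B).injective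
      (by simp [right_smul_def, regularBimoduleEquiv_tmul_smul])⟩⟩

theorem exists_right_generator_twistedBimodule (φ : B ≃ₐ[k] B) :
    ∃ x : twistedBimodule k B φ, ∀ y, ∃ b : B, op b • x = y :=
  ⟨(twistedBimoduleEquiv φ).symm 1, fun y ↦ ⟨φ.symm (twistedBimoduleEquiv φ y),
    (twistedBimoduleEquiv φ).injective (by simp [right_smul_def, twistedBimoduleEquiv_tmul_smul])⟩⟩

theorem finite_of_right_generator {X : ModuleCat (B ⊗[k] Bᵐᵒᵖ)} {x : X}
    (hx : ∀ y, ∃ b : B, op b • x = y) : Module.Finite (B ⊗[k] Bᵐᵒᵖ) X :=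
  .of_surjective (.toSpanSingleton _ X x) fun y ↦
    have ⟨b, hb⟩ := hx y
    ⟨1 ⊗ₜ op b, hb⟩

variable [FiniteDimensional k B]

instance finite_enveloping : Module.Finite k (B ⊗[k] Bᵐᵒᵖ) :=
  have : Module.Finite k Bᵐᵒᵖ := .equiv (opLinearEquiv k)
  inferInstance

theorem exists_isSyzygy_projectiveKDimLE (h : IsTwistedPeriodicAlgebra k B) :
    ∃ (r n : ℕ) (φ : B ≃ₐ[k] B), IsSyzygy (ProjectiveKDimLE k (B ⊗[k] Bᵐᵒᵖ) r) (n + 1)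
      (regularBimodule k B) (twistedBimodule k B φ) := by
  obtain ⟨n, φ, hn, h⟩ := h
  obtain ⟨n, rfl⟩ := Nat.exists_eq_add_of_le' hn
  have : IsNoetherianRing (B ⊗[k] Bᵐᵒᵖ) := .of_finite k _
  have ⟨_, hregular⟩ := exists_right_generator_regularBimodule (k := k) (B := B)
  have ⟨_, htwisted⟩ := exists_right_generator_twistedBimodule φ
  have := finite_of_right_generator hregular
  have := finite_of_right_generator htwisted
  obtain ⟨r, hr⟩ := h.isSyzygy.finite_of_isNoetherianRing.exists_bound
    (𝒟 := ProjectiveKDimLE k (B ⊗[k] Bᵐᵒᵖ))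
    (fun _ _ hrs _ hP ↦ ⟨⟨hP.finite, hP.kDim_le.trans hrs⟩, hP.projective⟩)
    fun P hP ↦ ⟨_, ⟨hP.2, le_rfl⟩, hP.1⟩
  exact ⟨r, n, φ, hr⟩

theorem KDimLE.balancedTensor_twistedBimodule {d : ℕ} {N : ModuleCat B} (hN : KDimLE k B d N)
    (φ : B ≃ₐ[k] B) : KDimLE k B d (.of B (BalancedTensor k B B (twistedBimodule k B φ) N)) := by
  have := hN.finite
  have : Module.Finite k N := .trans B N
  obtain ⟨x, hx⟩ := exists_right_generator_twistedBimodule φ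
  have := finite_of_right_generator hx
  have : Module.Finite k (twistedBimodule k B φ) := .trans (B ⊗[k] Bᵐᵒᵖ) _
  refine ⟨.of_restrictScalars_finite k B _, ?_⟩
  calc kDim k B (BalancedTensor k B B (twistedBimodule k B φ) N)
      = Module.finrank k (BalancedTensor k B B (twistedBimodule k B φ) N) := kDim_eq_finrank _
    _ ≤ Module.finrank k N := BalancedTensor.finrank_le_of_cyclic hx
    _ = kDim k B N := (kDim_eq_finrank _).symm
    _ ≤ d := hN.kDim_le

theorem ProjectiveKDimLE.balancedTensor {r d : ℕ} {P : ModuleCat (B ⊗[k] Bᵐᵒᵖ)}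
    {N : ModuleCat B} (hP : ProjectiveKDimLE k (B ⊗[k] Bᵐᵒᵖ) r P) (hN : KDimLE k B d N) :
    ProjectiveKDimLE k B (r * d) (.of B (BalancedTensor k B B P N)) := by
  have := hN.finite
  have : Module.Finite k N := .trans B N
  have := hP.finite
  have := hP.projective
  have : Module.Finite k P := .trans (B ⊗[k] Bᵐᵒᵖ) P
  refine ⟨⟨.of_restrictScalars_finite k B _, ?_⟩, projective_balancedTensor⟩
  calc kDim k B (BalancedTensor k B B P N)
      = Module.finrank k (BalancedTensor k B B P N) := kDim_eq_finrank _
    _ ≤ Module.finrank k P * Module.finrank k N := BalancedTensor.finrank_le_mul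
    _ = kDim k (B ⊗[k] Bᵐᵒᵖ) P * kDim k B N := by rw [kDim_eq_finrank, kDim_eq_finrank]
    _ ≤ r * d := Nat.mul_le_mul hP.kDim_le hN.kDim_le

theorem IsSyzygy.balancedTensor_twistedBimodule {r n d : ℕ} {φ : B ≃ₐ[k] B}
    (h : IsSyzygy (ProjectiveKDimLE k (B ⊗[k] Bᵐᵒᵖ) r) n
      (regularBimodule k B) (twistedBimodule k B φ)) {N : ModuleCat B} (hN : KDimLE k B d N) :
    IsSyzygy (ProjectiveKDimLE k B (r * d)) n N
      (.of B (BalancedTensor k B B (twistedBimodule k B φ) N)) := by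
  obtain ⟨e⟩ := nonempty_regularBimodule_balancedTensor_equiv (k := k) (B := B) N
  have hright (P : ModuleCat (B ⊗[k] Bᵐᵒᵖ)) (hP : ProjectiveKDimLE k (B ⊗[k] Bᵐᵒᵖ) r P) :
      Module.Projective Bᵐᵒᵖ P :=
    have := hP.projective
    projective_right
  exact (h.balancedTensor hright (fun P hP ↦ hP.balancedTensor hN)
    projective_right_regularBimodule).of_equiv e

end TwistedPeriodic

/-- If a finite-dimensional `k`-algebra `B` is twisted periodic, then every
finitely generated `B`-module has complexity at most one. -/
theorem complexityLeOne_of_isTwistedPeriodicAlgebra (k B : Type) [Field k] [Ring B]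
    [Algebra k B] [FiniteDimensional k B] (h : IsTwistedPeriodicAlgebra k B)
    (M : Type) [AddCommGroup M] [Module B M] [Module.Finite B M] :
    ComplexityLeOne k B M := by
  obtain ⟨r, n, φ, h⟩ := exists_isSyzygy_projectiveKDimLE h
  set d := kDim k B M
  have hsyzygy (N : ModuleCat B) (hN : KDimLE k B d N) :
      ∃ m K, KDimLE k B d K ∧ IsSyzygy (ProjectiveKDimLE k B (r * d)) (m + 1) N K :=
    ⟨n, _, hN.balancedTensor_twistedBimodule φ, h.balancedTensor_twistedBimodule hN⟩
  obtain ⟨P, f, π, hP, hexact⟩ := exists_resolution_of_exists_cover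
    (𝒢 := fun N ↦ ∃ m K, KDimLE k B d K ∧ IsSyzygy (ProjectiveKDimLE k B (r * d)) m N K)
    (fun N ⟨m, K, hK, hNK⟩ ↦ hNK.exists_cover hsyzygy hK)
    (N := .of B M) ⟨0, .of B M, ⟨‹_›, le_rfl⟩, .zero (.refl B M)⟩
  exact ⟨r * d, P, f, π, fun i ↦ (hP i).projective, fun i ↦ (hP i).finite,
    fun i ↦ (hP i).kDim_le, hexact⟩
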